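/- The map B̄ : H^{n+1}(A,A*) → H^n(A,A*) defined on cocycles by B̄(f)(a₁ ⊗ ⋯ ⊗ aₙ)(a₀) = Σ_{i=0}^{n} (−1)^{ni} f(a_i ⊗ ⋯ ⊗ aₙ ⊗ a₀ ⊗ ⋯ ⊗ a_{i−1})(1) is well-defined on cohomology, i.e., it sends cocycles to cocycles and coboundaries to coboundaries. -/

import Mathlib

section Cochains

variable {k : Type} [CommRing k] {A : Type} [Ring A] [Algebra k A]
variable {W : Type} [AddCommGroup W] [Module k W]

/-- The tuple obtained from `a : Fin (n+1) → A` by multiplying entries `i` and `i+1`. -/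
def mergeT {n : ℕ} (a : Fin (n+1) → A) (i : Fin n) : Fin n → A := fun j =>
  if (j : ℕ) < (i : ℕ) then a (Fin.castSucc j)
  else if (j : ℕ) = (i : ℕ) then a (Fin.castSucc j) * a (Fin.succ j)
  else a (Fin.succ j)

/-- The standard Hochschild coboundary formula for a cochain with values in a
bimodule `W` whose left and right `A`-actions are `la` and `ra`. -/
def hdG (la : A → W → W) (ra : A → W → W) {n : ℕ}
    (f : (Fin n → A) → W) (a : Fin (n+1) → A) : W :=
  la (a 0) (f (Fin.tail a))
    + (∑ i : Fin n, ((-1 : ℤ)^((i : ℕ)+1)) • f (mergeT a i))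
    + ((-1 : ℤ)^(n+1)) • ra (a (Fin.last n)) (f (Fin.init a))

/-- The left action of `A` on `A* = Hom_k(A,k)`: `(a·f)(x) = f(xa)`. -/
noncomputable def laD (a : A) (f : Module.Dual k A) : Module.Dual k A :=
  f ∘ₗ LinearMap.mulRight k a

/-- The right action of `A` on `A* = Hom_k(A,k)`: `(f·b)(x) = f(bx)`. -/
noncomputable def raD (b : A) (f : Module.Dual k A) : Module.Dual k A :=
  f ∘ₗ LinearMap.mulLeft k b

/-- The Hochschild coboundary on cochains with values in `A*`, with the canonical
bimodule structure `(afb)(x) = f(bxa)`. -/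
noncomputable def hdD {n : ℕ} (f : (Fin n → A) → Module.Dual k A)
    (a : Fin (n+1) → A) : Module.Dual k A :=
  hdG laD raD f a

/-- Being a Hochschild coboundary, for cochains with values in a bimodule `W`
with actions `la`, `ra` (in degree `0` this means being zero). -/
def IsCoboundG (la : A → W → W) (ra : A → W → W) :
    (n : ℕ) → ((Fin n → A) → W) → Prop
  | 0, F => ∀ a, F a = 0
  | m+1, F => ∃ g : MultilinearMap k (fun _ : Fin m => A) W,
      ∀ a, F a = hdG la ra (⇑g) a

/-- Being a Hochschild coboundary for `A*`-valued cochains. -/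
noncomputable def IsCoboundD : (n : ℕ) → ((Fin n → A) → Module.Dual k A) → Prop :=
  IsCoboundG (k := k) (A := A) (laD (k := k) (A := A)) (raD (k := k) (A := A))

/-- The tuple `(a_i, …, aₙ, a₀, …, a_{i-1})` built from `a₀`-placeholder and `a`,
with the placeholder slot left as `1`. -/
noncomputable def cycTuple {n : ℕ} (a : Fin n → A) (i : Fin (n+1)) : Fin (n+1) → A :=
  fun j => if h : j + i = 0 then 1 else a ((j + i).pred h)

/-- The operator `B̄ : Hom(A^{⊗(n+1)}, A*) → Hom(A^{⊗ n}, A*)`,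
`B̄(f)(a₁ ⊗ ⋯ ⊗ aₙ)(a₀) = ∑ (−1)^{ni} f(a_i ⊗ ⋯ ⊗ aₙ ⊗ a₀ ⊗ ⋯ ⊗ a_{i-1})(1)`. -/
noncomputable def Bbar {n : ℕ}
    (f : MultilinearMap k (fun _ : Fin (n+1) => A) (Module.Dual k A))
    (a : Fin n → A) : Module.Dual k A :=
  ∑ i : Fin (n+1), ((-1 : ℤ)^(n * (i : ℕ))) •
    ((Module.Dual.eval k A (1 : A)) ∘ₗ (f.toLinearMap (cycTuple a i) (-i)))

end Cochains

/-!
View an `A*`-valued `n`-cochain as a function `φ` of the `n + 1` variables `(x, a₁, …, aₙ)`. The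
Hochschild coboundary becomes the cyclic operator `b`, and `B̄ = N s`, where `s` inserts `1` in the
first slot and `N = ∑ tⁱ` is the norm of the signed cyclic rotation `t`.

The signed faces are conjugate under rotation: `(-1)ⁱ δᵢ = tⁱ δ₀ t⁻ⁱ`. As `N` absorbs powers of `t`
on both sides, `b N = N δ₀ N = N b'`, where `b'` omits the wrap-around face of `b`. Inserting a `1`
gives `s b = 1 - b' s - tⁿ` on `n`-cochains (without the term `b' s` for `n = 0`), and hence
`B̄ b = N s b = -N b' s = -b N s = -b B̄`.
-/

lemma neg_one_pow_mul_self {R : Type*} [Monoid R] [HasDistribNeg R] (n : ℕ) :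
    (-1 : R) ^ (n * n) = (-1) ^ n :=
  neg_one_pow_congr (by simp only [Nat.even_mul, or_self])

section Rotation

variable {α M : Type*} {n : ℕ}

/-- The tuple `(cᵢ, …, cₙ, c₀, …, cᵢ₋₁)`: indices are added in `Fin (n + 1)`, hence cyclically. -/
def rotateTuple (i : Fin (n + 1)) (c : Fin (n + 1) → α) : Fin (n + 1) → α :=
  fun j => c (j + i)

lemma rotateTuple_zero (c : Fin (n + 1) → α) : rotateTuple 0 c = c := by
  funext j
  rw [rotateTuple, add_zero]

lemma rotateTuple_rotateTuple (i j : Fin (n + 1)) (c : Fin (n + 1) → α) :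
    rotateTuple i (rotateTuple j c) = rotateTuple (i + j) c := by
  funext l
  simp only [rotateTuple, add_assoc]

lemma rotateTuple_one_cons (x : α) (a : Fin n → α) :
    rotateTuple 1 (Fin.cons x a : Fin (n + 1) → α) = Fin.snoc a x := by
  funext j
  induction j using Fin.lastCases with
  | last => simp [rotateTuple]
  | cast j => simp [rotateTuple]

lemma snoc_finRotate_symm (a : Fin n → α) (x : α) :
    (fun j => (Fin.snoc a x : Fin (n + 1) → α) ((finRotate (n + 1)).symm j)) = Fin.cons x a := by
  simp only [Fin.snoc_eq_cons_rotate, Equiv.apply_symm_apply]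

lemma rotateTuple_last (c : Fin (n + 1) → α) :
    rotateTuple (Fin.last n) c = Fin.cons (c (Fin.last n)) (Fin.init c) := by
  funext j
  induction j using Fin.cases with
  | zero => simp [rotateTuple]
  | succ j =>
    have shift : j.succ + Fin.last n = j.castSucc := by
      rw [← Fin.coeSucc_eq_succ, add_assoc, add_comm 1, Fin.last_add_one, add_zero]
    simp [rotateTuple, shift, Fin.init]

/-- Arbitrary functions of the `n + 1` variables `(x, a₁, …, aₙ)`, modelling `n`-cochains of the
cyclic complex. Multilinearity is not required. -/
abbrev CyclicCochain (α M : Type*) (n : ℕ) : Type _ := (Fin (n + 1) → α) → M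

variable [AddCommGroup M]

variable (α M n) in
/-- The signed cyclic operator `t`, given by `(tφ)(c₀, …, cₙ) = (-1)ⁿ φ(c₁, …, cₙ, c₀)`. -/
def signedRotation : Module.End ℤ (CyclicCochain α M n) :=
  (-1 : ℤ) ^ n • LinearMap.funLeft ℤ M (rotateTuple 1)

lemma signedRotation_apply (φ : CyclicCochain α M n) (c : Fin (n + 1) → α) :
    signedRotation α M n φ c = (-1 : ℤ) ^ n • φ (rotateTuple 1 c) := rfl

lemma signedRotation_pow_apply (i : Fin (n + 1)) (φ : CyclicCochain α M n)
    (c : Fin (n + 1) → α) :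
    (signedRotation α M n ^ (i : ℕ)) φ c = (-1 : ℤ) ^ (n * (i : ℕ)) • φ (rotateTuple i c) := by
  induction i using Fin.induction generalizing c with
  | zero => simp [rotateTuple_zero]
  | succ i ih =>
    rw [Fin.val_castSucc] at ih
    rw [Fin.val_succ, pow_succ', Module.End.mul_apply, signedRotation_apply, ih,
      rotateTuple_rotateTuple, Fin.coeSucc_eq_succ, smul_smul, ← pow_add, mul_add_one,
      add_comm n]

lemma signedRotation_pow_succ_self : signedRotation α M n ^ (n + 1) = 1 := by
  ext φ c
  have sign : (-1 : ℤ) ^ n * (-1) ^ (n * n) = 1 := by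
    rw [neg_one_pow_mul_self, ← mul_pow, neg_one_mul, neg_neg, one_pow]
  have pow_last := signedRotation_pow_apply (Fin.last n) φ (rotateTuple 1 c)
  rw [Fin.val_last, rotateTuple_rotateTuple, Fin.last_add_one, rotateTuple_zero] at pow_last
  rw [pow_succ', Module.End.mul_apply, signedRotation_apply, pow_last, smul_smul, sign, one_smul,
    Module.End.one_apply]

variable (α M n) in
/-- The cyclic norm operator `N = 1 + t + ⋯ + tⁿ`. -/
def cyclicNorm : Module.End ℤ (CyclicCochain α M n) :=
  ∑ i : Fin (n + 1), signedRotation α M n ^ (i : ℕ)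

lemma cyclicNorm_apply (φ : CyclicCochain α M n) (c : Fin (n + 1) → α) :
    cyclicNorm α M n φ c =
      ∑ i : Fin (n + 1), (-1 : ℤ) ^ (n * (i : ℕ)) • φ (rotateTuple i c) := by
  simp only [cyclicNorm, LinearMap.sum_apply, Finset.sum_apply, signedRotation_pow_apply]

lemma cyclicNorm_signedRotation_pow (m : ℕ) (φ : CyclicCochain α M n) :
    cyclicNorm α M n ((signedRotation α M n ^ m) φ) = cyclicNorm α M n φ := by
  have absorb : cyclicNorm α M n * signedRotation α M n = cyclicNorm α M n := by
    have geom := geom_sum_mul (signedRotation α M n) (n + 1)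
    rwa [signedRotation_pow_succ_self, sub_self, mul_sub_one, sub_eq_zero,
      ← Fin.sum_univ_eq_sum_range] at geom
  induction m with
  | zero => rfl
  | succ m ih => rw [pow_succ', Module.End.mul_apply, ← Module.End.mul_apply, absorb, ih]

lemma signedRotation_pow_cyclicNorm (m : ℕ) (φ : CyclicCochain α M n) :
    (signedRotation α M n ^ m) (cyclicNorm α M n φ) = cyclicNorm α M n φ := by
  have commutes : Commute (signedRotation α M n ^ m) (cyclicNorm α M n) :=
    Commute.sum_right _ _ _ fun i _ => Commute.pow_pow_self _ m i
  rw [← Module.End.mul_apply, commutes.eq, Module.End.mul_apply, cyclicNorm_signedRotation_pow]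

end Rotation

section Faces

variable {A : Type} [Ring A] {M : Type*} {n : ℕ}

lemma mergeT_cons_zero (x : A) (c : Fin (n + 1) → A) :
    mergeT (Fin.cons x c : Fin (n + 2) → A) 0 = Fin.cons (x * c 0) (Fin.tail c) := by
  funext j
  induction j using Fin.cases with
  | zero => simp [mergeT]
  | succ j => simp [mergeT, Fin.tail]

lemma mergeT_cons_one_zero (c : Fin (n + 1) → A) :
    mergeT (Fin.cons 1 c : Fin (n + 2) → A) 0 = c := by
  rw [mergeT_cons_zero, one_mul, Fin.cons_self_tail]

lemma mergeT_cons_succ (x : A) (c : Fin (n + 1) → A) (i : Fin n) :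
    mergeT (Fin.cons x c : Fin (n + 2) → A) i.succ = Fin.cons x (mergeT c i) := by
  funext j
  induction j using Fin.cases with
  | zero => simp [mergeT]
  | succ j => simp [mergeT]

lemma mergeT_snoc_castSucc (c : Fin (n + 1) → A) (x : A) (i : Fin n) :
    mergeT (Fin.snoc c x : Fin (n + 2) → A) i.castSucc = Fin.snoc (mergeT c i) x := by
  funext j
  induction j using Fin.lastCases with
  | last => simp [mergeT, i.isLt.not_gt, i.isLt.ne']
  | cast j =>
    simp only [mergeT, Fin.snoc_castSucc, Fin.succ_castSucc, Fin.val_castSucc]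

lemma rotateTuple_one_mergeT_succ (c : Fin (n + 2) → A) (i : Fin n) :
    rotateTuple 1 (mergeT c i.succ) = mergeT (rotateTuple 1 c) i.castSucc := by
  cases c using Fin.consCases with
  | _ x a => rw [mergeT_cons_succ, rotateTuple_one_cons, rotateTuple_one_cons, mergeT_snoc_castSucc]

variable [AddCommGroup M]

variable (M) in
/-- The face `(-1)ⁱ δᵢ`, where `(δᵢ φ)(c₀, …, cₙ₊₁) = φ(c₀, …, cᵢcᵢ₊₁, …, cₙ₊₁)`. -/
def signedFace (i : Fin (n + 1)) : CyclicCochain A M n →ₗ[ℤ] CyclicCochain A M (n + 1) :=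
  (-1 : ℤ) ^ (i : ℕ) • LinearMap.funLeft ℤ M fun c => mergeT c i

lemma signedFace_apply (i : Fin (n + 1)) (φ : CyclicCochain A M n) (c : Fin (n + 2) → A) :
    signedFace M i φ c = (-1 : ℤ) ^ (i : ℕ) • φ (mergeT c i) := rfl

lemma signedRotation_signedFace_castSucc (i : Fin n) (φ : CyclicCochain A M n) :
    signedRotation A M (n + 1) (signedFace M i.castSucc φ) =
      signedFace M i.succ (signedRotation A M n φ) := by
  funext c
  simp only [signedRotation_apply, signedFace_apply, smul_smul, rotateTuple_one_mergeT_succ,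
    Fin.val_succ, Fin.val_castSucc]
  congr 1
  ring

lemma signedRotation_pow_signedFace_zero (i : Fin (n + 1)) (φ : CyclicCochain A M n) :
    (signedRotation A M (n + 1) ^ (i : ℕ)) (signedFace M 0 φ) =
      signedFace M i ((signedRotation A M n ^ (i : ℕ)) φ) := by
  induction i using Fin.induction with
  | zero => rfl
  | succ i ih =>
    rw [Fin.val_castSucc] at ih
    rw [Fin.val_succ, pow_succ', pow_succ', Module.End.mul_apply, Module.End.mul_apply, ih,
      signedRotation_signedFace_castSucc]

lemma signedFace_eq_signedRotation_conj (i : Fin (n + 1)) (φ : CyclicCochain A M n) :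
    signedFace M i φ = (signedRotation A M (n + 1) ^ (i : ℕ))
      (signedFace M 0 ((signedRotation A M n ^ ((i.rev : ℕ) + 1)) φ)) := by
  have period : (i : ℕ) + (i.rev + 1) = n + 1 := by rw [Fin.val_rev]; lia
  rw [signedRotation_pow_signedFace_zero, ← Module.End.mul_apply, ← pow_add, period,
    signedRotation_pow_succ_self, Module.End.one_apply]

variable (A M n) in
/-- The operator `b'`: the Hochschild coboundary without its wrap-around face. -/
def barCoboundary : CyclicCochain A M n →ₗ[ℤ] CyclicCochain A M (n + 1) :=
  ∑ i : Fin (n + 1), signedFace M i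

variable (A M n) in
/-- The cyclic form `b` of the Hochschild coboundary. The wrap-around face
`(c₀, …, cₙ₊₁) ↦ (cₙ₊₁c₀, c₁, …, cₙ)` is encoded as `δ₀` after the rotation that brings `cₙ₊₁` to
the front. -/
def cyclicCoboundary : CyclicCochain A M n →ₗ[ℤ] CyclicCochain A M (n + 1) :=
  barCoboundary A M n + (signedRotation A M (n + 1) ^ (n + 1)) ∘ₗ signedFace M 0

lemma barCoboundary_apply (φ : CyclicCochain A M n) (c : Fin (n + 2) → A) :
    barCoboundary A M n φ c = ∑ i : Fin (n + 1), (-1 : ℤ) ^ (i : ℕ) • φ (mergeT c i) := by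
  simp only [barCoboundary, LinearMap.sum_apply, Finset.sum_apply, signedFace_apply]

lemma cyclicCoboundary_apply (φ : CyclicCochain A M n) (c : Fin (n + 2) → A) :
    cyclicCoboundary A M n φ c = barCoboundary A M n φ c + (-1 : ℤ) ^ (n + 1) •
      φ (Fin.cons (c (Fin.last (n + 1)) * c 0) (Fin.tail (Fin.init c))) := by
  have wrap := signedRotation_pow_apply (Fin.last (n + 1)) (signedFace M 0 φ) c
  rw [Fin.val_last, neg_one_pow_mul_self, signedFace_apply, Fin.val_zero, pow_zero, one_smul,
    rotateTuple_last, mergeT_cons_zero] at wrap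
  exact congrArg (barCoboundary A M n φ c + ·) wrap

lemma cyclicNorm_barCoboundary (φ : CyclicCochain A M n) :
    cyclicNorm A M (n + 1) (barCoboundary A M n φ) =
      cyclicNorm A M (n + 1) (signedFace M 0 (cyclicNorm A M n φ)) := by
  have face (i : Fin (n + 1)) : cyclicNorm A M (n + 1) (signedFace M i φ) =
      cyclicNorm A M (n + 1)
        (signedFace M 0 ((signedRotation A M n ^ (i.rev : ℕ)) (signedRotation A M n φ))) := by
    rw [signedFace_eq_signedRotation_conj, cyclicNorm_signedRotation_pow, pow_succ,
      Module.End.mul_apply]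
  have norm_rev :
      ∑ i : Fin (n + 1), (signedRotation A M n ^ (i.rev : ℕ)) (signedRotation A M n φ) =
        cyclicNorm A M n φ := by
    refine (Equiv.sum_comp Fin.revPerm fun i : Fin (n + 1) =>
      (signedRotation A M n ^ (i : ℕ)) (signedRotation A M n φ)).trans ?_
    rw [← LinearMap.sum_apply, ← cyclicNorm, ← cyclicNorm_signedRotation_pow 1 φ, pow_one]
  simp only [barCoboundary, LinearMap.sum_apply, map_sum, face]
  simp only [← map_sum, norm_rev]

lemma cyclicCoboundary_cyclicNorm (φ : CyclicCochain A M n) :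
    cyclicCoboundary A M n (cyclicNorm A M n φ) =
      cyclicNorm A M (n + 1) (signedFace M 0 (cyclicNorm A M n φ)) := by
  have face (i : Fin (n + 1)) : signedFace M i (cyclicNorm A M n φ) =
      (signedRotation A M (n + 1) ^ (i : ℕ)) (signedFace M 0 (cyclicNorm A M n φ)) := by
    rw [signedRotation_pow_signedFace_zero, signedRotation_pow_cyclicNorm]
  have norm_split (ψ : CyclicCochain A M (n + 1)) : cyclicNorm A M (n + 1) ψ =
      ∑ i : Fin (n + 1), (signedRotation A M (n + 1) ^ (i : ℕ)) ψ +
        (signedRotation A M (n + 1) ^ (n + 1)) ψ := by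
    rw [cyclicNorm, LinearMap.sum_apply, Fin.sum_univ_castSucc]
    rfl
  rw [norm_split, cyclicCoboundary, LinearMap.add_apply, barCoboundary, LinearMap.sum_apply,
    Finset.sum_congr rfl fun i _ => face i, LinearMap.comp_apply]

variable (A M n) in
/-- The operator `s`, given by `(sφ)(c₀, …, cₙ) = φ(1, c₀, …, cₙ)`. -/
def insertOne : CyclicCochain A M (n + 1) →ₗ[ℤ] CyclicCochain A M n :=
  LinearMap.funLeft ℤ M fun c => Fin.cons 1 c

lemma insertOne_apply (φ : CyclicCochain A M (n + 1)) (c : Fin (n + 1) → A) :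
    insertOne A M n φ c = φ (Fin.cons 1 c) := rfl

lemma insertOne_barCoboundary_zero (φ : CyclicCochain A M 0) :
    insertOne A M 0 (barCoboundary A M 0 φ) = φ := by
  funext c
  rw [insertOne_apply, barCoboundary_apply, Fin.sum_univ_one, Fin.val_zero, pow_zero, one_smul,
    mergeT_cons_one_zero]

lemma insertOne_barCoboundary_succ (φ : CyclicCochain A M (n + 1)) :
    insertOne A M (n + 1) (barCoboundary A M (n + 1) φ) =
      φ - barCoboundary A M n (insertOne A M n φ) := by
  funext c
  simp only [insertOne_apply, barCoboundary_apply, Pi.sub_apply]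
  rw [Fin.sum_univ_succ, Fin.val_zero, pow_zero, one_smul, mergeT_cons_one_zero, sub_eq_add_neg,
    ← Finset.sum_neg_distrib]
  simp only [mergeT_cons_succ, Fin.val_succ, pow_succ, mul_neg_one, neg_smul]

lemma insertOne_cyclicCoboundary (φ : CyclicCochain A M n) :
    insertOne A M n (cyclicCoboundary A M n φ) =
      insertOne A M n (barCoboundary A M n φ) - (signedRotation A M n ^ n) φ := by
  funext c
  have pow_last := signedRotation_pow_apply (Fin.last n) φ c
  rw [Fin.val_last, neg_one_pow_mul_self, rotateTuple_last] at pow_last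
  rw [Pi.sub_apply, pow_last, insertOne_apply, insertOne_apply, cyclicCoboundary_apply,
    Fin.cons_zero, mul_one, ← Fin.succ_last, Fin.cons_succ, Fin.tail_init_eq_init_tail,
    Fin.tail_cons, pow_succ, mul_neg_one, neg_smul, sub_eq_add_neg]

variable (A M n) in
/-- The cyclic form `N s` of the operator `B̄`. -/
def cyclicB : CyclicCochain A M (n + 1) →ₗ[ℤ] CyclicCochain A M n :=
  cyclicNorm A M n ∘ₗ insertOne A M n

lemma cyclicB_apply (φ : CyclicCochain A M (n + 1)) :
    cyclicB A M n φ = cyclicNorm A M n (insertOne A M n φ) := rfl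

lemma cyclicB_cyclicCoboundary_zero (φ : CyclicCochain A M 0) :
    cyclicB A M 0 (cyclicCoboundary A M 0 φ) = 0 := by
  rw [cyclicB_apply, insertOne_cyclicCoboundary, insertOne_barCoboundary_zero, pow_zero,
    Module.End.one_apply, sub_self, map_zero]

lemma cyclicB_cyclicCoboundary_succ (φ : CyclicCochain A M (n + 1)) :
    cyclicB A M (n + 1) (cyclicCoboundary A M (n + 1) φ) =
      -cyclicCoboundary A M n (cyclicB A M n φ) := by
  rw [cyclicB_apply, cyclicB_apply, insertOne_cyclicCoboundary, insertOne_barCoboundary_succ,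
    map_sub, map_sub, cyclicNorm_signedRotation_pow, cyclicNorm_barCoboundary,
    cyclicCoboundary_cyclicNorm, sub_right_comm, sub_self, zero_sub]

end Faces

section DualCochains

variable {k : Type} [CommRing k] {A : Type} [Ring A] [Algebra k A] {n : ℕ}

/-- The cyclic form `φ(x, a₁, …, aₙ) = f(a₁, …, aₙ)(x)` of an `A*`-valued cochain `f`. -/
def cyclicForm (f : (Fin n → A) → Module.Dual k A) : CyclicCochain A k n :=
  fun c => f (Fin.tail c) (c 0)

lemma cyclicForm_cons (f : (Fin n → A) → Module.Dual k A) (x : A) (a : Fin n → A) :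
    cyclicForm f (Fin.cons x a) = f a x := by
  rw [cyclicForm, Fin.tail_cons, Fin.cons_zero]

lemma cyclicForm_injective :
    Function.Injective (cyclicForm : ((Fin n → A) → Module.Dual k A) → CyclicCochain A k n) := by
  intro f g hfg
  ext a x
  rw [← cyclicForm_cons f, hfg, cyclicForm_cons]

lemma hdD_apply (f : (Fin n → A) → Module.Dual k A) (a : Fin (n + 1) → A) (x : A) :
    hdD f a x = f (Fin.tail a) (x * a 0) +
      ∑ i : Fin n, (-1 : ℤ) ^ ((i : ℕ) + 1) • f (mergeT a i) x +
      (-1 : ℤ) ^ (n + 1) • f (Fin.init a) (a (Fin.last n) * x) := by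
  simp [hdD, hdG, laD, raD, LinearMap.sum_apply]

lemma cyclicForm_hdD (f : (Fin n → A) → Module.Dual k A) :
    cyclicForm (hdD f) = cyclicCoboundary A k n (cyclicForm f) := by
  funext c
  cases c using Fin.consCases with
  | _ x a =>
    rw [cyclicForm_cons, hdD_apply, cyclicCoboundary_apply, barCoboundary_apply,
      Fin.sum_univ_succ]
    simp only [mergeT_cons_zero, mergeT_cons_succ, cyclicForm_cons, Fin.val_zero, pow_zero,
      one_smul, Fin.val_succ, ← Fin.succ_last, Fin.cons_succ, Fin.cons_zero,
      Fin.tail_init_eq_init_tail, Fin.tail_cons]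

lemma update_cycTuple (a : Fin n → A) (i : Fin (n + 1)) (x : A) :
    Function.update (cycTuple a i) (-i) x = rotateTuple i (Fin.cons x a) := by
  funext j
  by_cases slot : j = -i
  · simp [rotateTuple, slot]
  · have shifted_ne_zero : j + i ≠ 0 := fun h => slot (eq_neg_of_add_eq_zero_left h)
    obtain ⟨l, hl⟩ := Fin.exists_succ_eq_of_ne_zero shifted_ne_zero
    simp [Function.update_of_ne slot, cycTuple, rotateTuple, ← hl]

lemma cyclicForm_Bbar (f : MultilinearMap k (fun _ : Fin (n + 1) => A) (Module.Dual k A)) :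
    cyclicForm (Bbar f) = cyclicB A k n (cyclicForm f) := by
  funext c
  cases c using Fin.consCases with
  | _ x a =>
    simp only [cyclicForm_cons, Bbar, cyclicB_apply, cyclicNorm_apply, insertOne_apply,
      LinearMap.sum_apply, LinearMap.smul_apply, LinearMap.comp_apply,
      MultilinearMap.toLinearMap_apply, update_cycTuple, Module.Dual.eval_apply]

lemma cyclicForm_hdD_Bbar
    (f : MultilinearMap k (fun _ : Fin (n + 1) => A) (Module.Dual k A)) :
    cyclicForm (hdD (Bbar f)) = -cyclicB A k (n + 1) (cyclicForm (hdD f)) := by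
  rw [cyclicForm_hdD, cyclicForm_hdD, cyclicForm_Bbar, cyclicB_cyclicCoboundary_succ, neg_neg]

lemma hdD_Bbar_eq_zero {f : MultilinearMap k (fun _ : Fin (n + 1) => A) (Module.Dual k A)}
    (hf : hdD f = 0) : hdD (Bbar f) = 0 :=
  cyclicForm_injective <| by
    rw [cyclicForm_hdD_Bbar, hf]
    exact neg_eq_zero.mpr (map_zero _)

lemma Bbar_eq_zero_of_eq_hdD {f : MultilinearMap k (fun _ : Fin 1 => A) (Module.Dual k A)}
    {h : (Fin 0 → A) → Module.Dual k A} (hf : ⇑f = hdD h) : Bbar f = 0 :=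
  cyclicForm_injective <| by
    rw [cyclicForm_Bbar, hf, cyclicForm_hdD, cyclicB_cyclicCoboundary_zero]
    rfl

lemma Bbar_eq_hdD_neg_Bbar
    {f : MultilinearMap k (fun _ : Fin (n + 2) => A) (Module.Dual k A)}
    {h : MultilinearMap k (fun _ : Fin (n + 1) => A) (Module.Dual k A)} (hf : ⇑f = hdD h) :
    Bbar f = hdD (-Bbar h) :=
  cyclicForm_injective <| by
    have cyclicForm_neg : cyclicForm (-Bbar h) = -cyclicForm (Bbar h) := rfl
    rw [cyclicForm_Bbar, hf, cyclicForm_hdD, cyclicB_cyclicCoboundary_succ, cyclicForm_hdD,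
      cyclicForm_neg, map_neg, cyclicForm_Bbar]

/-- `B̄ f` as a multilinear cochain. Its cyclic form is a sum of rotations of `f(·)(1)`; since
`curryRight` splits off the last variable, `finRotate` first moves the variable `x` there. -/
noncomputable def bbarMultilinear
    (f : MultilinearMap k (fun _ : Fin (n + 1) => A) (Module.Dual k A)) :
    MultilinearMap k (fun _ : Fin n => A) (Module.Dual k A) :=
  ((∑ i : Fin (n + 1), (-1 : ℤ) ^ (n * (i : ℕ)) •
    ((Module.Dual.eval k A 1).compMultilinearMap f).domDomCongr (Equiv.addRight i)).domDomCongr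
      (finRotate (n + 1)).symm).curryRight

lemma coe_bbarMultilinear
    (f : MultilinearMap k (fun _ : Fin (n + 1) => A) (Module.Dual k A)) :
    ⇑(bbarMultilinear f) = Bbar f := by
  apply cyclicForm_injective
  funext c
  cases c using Fin.consCases with
  | _ x a =>
    rw [cyclicForm_Bbar, cyclicB_apply, cyclicNorm_apply, cyclicForm_cons, bbarMultilinear,
      MultilinearMap.curryRight_apply, MultilinearMap.domDomCongr_apply, snoc_finRotate_symm,
      sum_apply]
    rfl

end DualCochains

/-- The map `B̄ : H^{n+1}(A,A*) → H^n(A,A*)` defined on cocycles by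
`B̄(f)(a₁ ⊗ ⋯ ⊗ aₙ)(a₀) = Σ_{i=0}^{n} (−1)^{ni} f(a_i ⊗ ⋯ ⊗ aₙ ⊗ a₀ ⊗ ⋯ ⊗ a_{i−1})(1)`
is well defined on cohomology: it sends cocycles to cocycles (and `B̄ f` is again a
multilinear cochain) and coboundaries to coboundaries. -/
theorem statement3 (k : Type) [CommRing k] (A : Type) [Ring A] [Algebra k A] (n : ℕ)
    (f : MultilinearMap k (fun _ : Fin (n+1) => A) (Module.Dual k A))
    (hf : ∀ a, hdD (⇑f) a = 0) :
    (∃ g : MultilinearMap k (fun _ : Fin n => A) (Module.Dual k A),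
        (∀ a, ⇑g a = Bbar f a) ∧ ∀ a, hdD (⇑g) a = 0) ∧
    (∀ h : MultilinearMap k (fun _ : Fin n => A) (Module.Dual k A),
        (∀ a, ⇑f a = hdD (⇑h) a) → IsCoboundD n (Bbar f)) := by
  have cocycle : hdD (⇑f) = 0 := funext hf
  refine ⟨⟨bbarMultilinear f, congrFun (coe_bbarMultilinear f), fun a => ?_⟩, fun h hfh => ?_⟩
  · rw [coe_bbarMultilinear, hdD_Bbar_eq_zero cocycle, Pi.zero_apply]
  · have coboundary : ⇑f = hdD (⇑h) := funext hfh
    cases n with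
    | zero => exact congrFun (Bbar_eq_zero_of_eq_hdD coboundary)
    | succ n =>
      refine ⟨-bbarMultilinear h, congrFun ?_⟩
      rw [Bbar_eq_hdD_neg_Bbar coboundary, ← coe_bbarMultilinear]
      rfl
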